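/- Let c₀ be a real number. The function x ↦ (x + c₀)(e - (1 + 1/x)^x) is completely monotonic on (0,∞) if and only if c₀ ≥ 11/12. -/

import Mathlib

open Set Real

/-- `f` is completely monotonic on `s`: smooth on `s` and `(-1)^n f^(n) ≥ 0` on `s`. -/
def CompletelyMonotonicOn (f : ℝ → ℝ) (s : Set ℝ) : Prop :=
  ContDiffOn ℝ (⊤ : ℕ∞) f s ∧ ∀ (n : ℕ), ∀ x ∈ s, 0 ≤ (-1 : ℝ) ^ n * iteratedDerivWithin n f s x

/-- `f` is absolutely monotonic on `s`: smooth on `s` and all derivatives nonnegative. -/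
def AbsolutelyMonotonicOn (f : ℝ → ℝ) (s : Set ℝ) : Prop :=
  ContDiffOn ℝ (⊤ : ℕ∞) f s ∧ ∀ (n : ℕ), ∀ x ∈ s, 0 ≤ iteratedDerivWithin n f s x

/-- `f` is a Bernstein function on `(0,∞)`. -/
def BernsteinOn (f : ℝ → ℝ) (s : Set ℝ) : Prop :=
  ContDiffOn ℝ (⊤ : ℕ∞) f s ∧ (∀ x ∈ s, 0 ≤ f x) ∧
    ∀ (n : ℕ), 1 ≤ n → ∀ x ∈ s, 0 ≤ (-1 : ℝ) ^ (n - 1) * iteratedDerivWithin n f s x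

/-!
Put `y = 1 / (x + 1)`. Then `(1 + 1 / x) ^ x = e * G(y)` with `G(y) = ∑ aₙ yⁿ`: both sides have the
logarithmic derivative `log (1 + 1 / x) - 1 / (x + 1)`, and they agree in the limit `x → ∞`. Here
`a₁ = -1/2`, `a₂ = -1/24`, and the recursion for `aₙ` gives `aₙ₊₁ ≤ aₙ / 12 ≤ 0` for `n ≥ 1`.
Since `x + c = 1 / y - (1 - c)`, the function of the theorem is a power series in `y` whose
coefficients past the constant one are `e * ((1 - c) * aₙ - aₙ₊₁)`, `n ≥ 1`. These are all
nonnegative when `1 - c ≤ 1/12`, and then the series is absolutely monotonic in `y`, hence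
completely monotonic in `x`. Conversely, the sign of the first derivative as `x → ∞` is determined
by the coefficient of `y`, which is nonnegative only if `1 - c ≤ 1/12`.
-/

section

open Filter Topology

section Monotonicity

variable {f g F : ℝ → ℝ} {s t : Set ℝ}

theorem completelyMonotonicOn_congr (h : EqOn f g s) :
    CompletelyMonotonicOn f s ↔ CompletelyMonotonicOn g s := by
  refine and_congr (contDiffOn_congr h) (forall_congr' fun n => forall₂_congr fun x hx => ?_)
  rw [iteratedDerivWithin_congr h hx]

theorem AbsolutelyMonotonicOn.comp_completelyMonotonicOn
    (hF : AbsolutelyMonotonicOn F t) (hg : CompletelyMonotonicOn g s) (ht : UniqueDiffOn ℝ t)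
    (hs : UniqueDiffOn ℝ s) (hst : MapsTo g s t) : CompletelyMonotonicOn (F ∘ g) s := by
  refine ⟨hF.1.comp hg.1 hst, fun n x hx => ?_⟩
  rw [iteratedDerivWithin_comp_eq_sum_orderedFinpartition (hF.1 _ (hst hx)) (hg.1 x hx) ht hs hx
    hst (mod_cast le_top), Finset.mul_sum]
  refine Finset.sum_nonneg fun c _ => ?_
  have sign_eq : (-1 : ℝ) ^ n = ∏ j, (-1) ^ c.partSize j := by
    simpa only [Finset.prod_const, Finset.card_univ, Fintype.card_fin] using
      (c.prod_sigma_eq_prod fun _ => (-1 : ℝ)).symm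
  rw [sign_eq, mul_left_comm, ← Finset.prod_mul_distrib]
  exact mul_nonneg (hF.2 _ _ (hst hx)) (Finset.prod_nonneg fun j _ => hg.2 _ x hx)

theorem completelyMonotonicOn_inv_add_const {a : ℝ} (ha : 0 ≤ a) :
    CompletelyMonotonicOn (fun x => (x + a)⁻¹) (Ioi 0) := by
  have pos {x : ℝ} (hx : x ∈ Ioi 0) : 0 < x + a := add_pos_of_pos_of_nonneg hx ha
  refine ⟨fun x hx => ?_, fun n x hx => ?_⟩
  · have := (pos hx).ne'
    fun_prop (disch := assumption)
  · rw [iteratedDerivWithin_of_isOpen isOpen_Ioi hx,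
      iteratedDeriv_comp_add_const n (fun y : ℝ => y⁻¹) a]
    simp only [iteratedDeriv_eq_iterate, iter_deriv_inv, ← mul_assoc, ← mul_pow, neg_mul_neg,
      one_mul, one_pow]
    have := pos hx
    positivity

end Monotonicity

section PowerSeries

open FormalMultilinearSeries

variable {𝕜 : Type*} [NontriviallyNormedField 𝕜]

theorem mem_eball_zero_one {E : Type*} [SeminormedAddGroup E] {y : E} :
    y ∈ Metric.eball 0 1 ↔ ‖y‖ < 1 := by
  rw [← ENNReal.coe_one, Metric.eball_coe, mem_ball_zero_iff, NNReal.coe_one]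

theorem hasFPowerSeriesOnBall_deriv [CompleteSpace 𝕜] {f : 𝕜 → 𝕜}
    {p : FormalMultilinearSeries 𝕜 𝕜 𝕜} {x : 𝕜} {r : ENNReal} (hf : HasFPowerSeriesOnBall f p x r) :
    HasFPowerSeriesOnBall (deriv f) (ofScalars 𝕜 fun n => (n + 1) * p.coeff (n + 1)) x r := by
  convert! (ContinuousLinearMap.apply 𝕜 𝕜 (1 : 𝕜)).comp_hasFPowerSeriesOnBall hf.fderiv
  ext n
  simp

theorem hasSum_coeff_mul_pow {f : 𝕜 → 𝕜} {p : FormalMultilinearSeries 𝕜 𝕜 𝕜} {r : ENNReal}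
    {y : 𝕜} (hf : HasFPowerSeriesOnBall f p 0 r) (hy : y ∈ Metric.eball 0 r) :
    HasSum (fun n => p.coeff n * y ^ n) (f y) := by
  simpa only [apply_eq_pow_smul_coeff, zero_add, smul_eq_mul, mul_comm] using hf.hasSum hy

theorem hasFPowerSeriesOnBall_ofScalarsSum [CompleteSpace 𝕜] {a : ℕ → 𝕜} {C : ℝ}
    (ha : ∀ n, ‖a n‖ ≤ C) : HasFPowerSeriesOnBall (ofScalarsSum a) (ofScalars 𝕜 a) 0 1 := by
  have radius_ge : 1 ≤ (ofScalars 𝕜 a).radius :=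
    le_radius_of_bound (r := 1) _ C fun n => by simpa [ofScalars_norm] using ha n
  exact ((ofScalars 𝕜 a).hasFPowerSeriesOnBall (one_pos.trans_le radius_ge)).mono one_pos radius_ge

theorem hasSum_ofScalarsSum [CompleteSpace 𝕜] {a : ℕ → 𝕜} {C : ℝ} (ha : ∀ n, ‖a n‖ ≤ C) {y : 𝕜}
    (hy : ‖y‖ < 1) : HasSum (fun n => a n * y ^ n) (ofScalarsSum a y) := by
  simpa only [coeff_ofScalars] using
    hasSum_coeff_mul_pow (hasFPowerSeriesOnBall_ofScalarsSum ha) (mem_eball_zero_one.mpr hy)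

variable {F : ℝ → ℝ} {p : FormalMultilinearSeries ℝ ℝ ℝ} {r : ENNReal}

theorem iteratedDeriv_nonneg_of_coeff_nonneg (hF : HasFPowerSeriesOnBall F p 0 r)
    (hp : ∀ n, 0 ≤ p.coeff n) (n : ℕ) {y : ℝ} (hy₀ : 0 ≤ y) (hy : y ∈ Metric.eball 0 r) :
    0 ≤ iteratedDeriv n F y := by
  induction n generalizing F p with
  | zero =>
    exact (hasSum_coeff_mul_pow hF hy).nonneg fun n => mul_nonneg (hp n) (pow_nonneg hy₀ n)
  | succ n ih =>
    rw [iteratedDeriv_succ']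
    refine ih (hasFPowerSeriesOnBall_deriv hF) fun n => ?_
    rw [coeff_ofScalars]
    exact mul_nonneg n.cast_add_one_pos.le (hp (n + 1))

theorem absolutelyMonotonicOn_of_coeff_nonneg (hF : HasFPowerSeriesOnBall F p 0 r)
    (hp : ∀ n, 0 ≤ p.coeff n) : AbsolutelyMonotonicOn F (Ici 0 ∩ Metric.eball 0 r) := by
  have smooth : ∀ y ∈ Ici 0 ∩ Metric.eball 0 r, ∀ n, ContDiffAt ℝ n F y := fun y hy n =>
    (hF.analyticAt_of_mem hy.2).contDiffAt
  have uniqueDiff := (uniqueDiffOn_Ici (0 : ℝ)).inter (Metric.isOpen_eball (x := 0) (ε := r))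
  refine ⟨fun y hy => (smooth y hy _).contDiffWithinAt, fun n y hy => ?_⟩
  rw [iteratedDerivWithin_eq_iteratedDeriv uniqueDiff (smooth y hy n) hy]
  exact iteratedDeriv_nonneg_of_coeff_nonneg hF hp n hy.1 hy.2

theorem completelyMonotonicOn_comp_inv_add_const_of_coeff_nonneg {a : ℝ} (ha : 0 ≤ a)
    (hF : HasFPowerSeriesOnBall F p 0 r) (hp : ∀ n, 0 ≤ p.coeff n)
    (har : MapsTo (fun x => (x + a)⁻¹) (Ioi 0) (Metric.eball 0 r)) :
    CompletelyMonotonicOn (fun x => F (x + a)⁻¹) (Ioi 0) :=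
  (absolutelyMonotonicOn_of_coeff_nonneg hF hp).comp_completelyMonotonicOn
    (completelyMonotonicOn_inv_add_const ha) ((uniqueDiffOn_Ici 0).inter Metric.isOpen_eball)
    (uniqueDiffOn_Ioi 0) fun _ hx =>
      ⟨mem_Ici.mpr (inv_nonneg.mpr (add_nonneg (le_of_lt hx) ha)), har hx⟩

end PowerSeries

theorem tendsto_inv_add_const_atTop_zero (a : ℝ) :
    Tendsto (fun x : ℝ => (x + a)⁻¹) atTop (𝓝 0) :=
  tendsto_inv_atTop_zero.comp (tendsto_atTop_add_const_right _ a tendsto_id)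

theorem deriv_nonneg_of_completelyMonotonicOn_comp_inv_add_const {F : ℝ → ℝ} {a : ℝ}
    (hF : ContDiffAt ℝ 1 F 0)
    (h : CompletelyMonotonicOn (fun x => F (x + a)⁻¹) (Ioi 0)) : 0 ≤ deriv F 0 := by
  have tendsto_inv := tendsto_inv_add_const_atTop_zero a
  have tendsto_deriv : Tendsto (fun x : ℝ => deriv F (x + a)⁻¹) atTop (𝓝 (deriv F 0)) :=
    ((hF.continuousAt_fderiv one_ne_zero).clm_apply continuousAt_const).tendsto.comp tendsto_inv
  have eventually_differentiable : ∀ᶠ x in atTop, DifferentiableAt ℝ F (x + a : ℝ)⁻¹ :=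
    tendsto_inv.eventually
      ((hF.eventually (by decide)).mono fun y hy => hy.differentiableAt one_ne_zero)
  refine ge_of_tendsto tendsto_deriv ?_
  filter_upwards [eventually_differentiable, eventually_gt_atTop 0, eventually_gt_atTop (-a)]
    with x hFx hx hxa
  have hxa : 0 < x + a := by linarith
  have hasDerivAt : HasDerivAt (fun x => F (x + a)⁻¹) (deriv F (x + a)⁻¹ * (-1 / (x + a) ^ 2)) x :=
    hFx.hasDerivAt.comp x (((hasDerivAt_id x).add_const a).fun_inv hxa.ne')
  have deriv_nonpos := h.2 1 x hx
  rw [iteratedDerivWithin_one, hasDerivAt.hasDerivWithinAt.derivWithin (uniqueDiffOn_Ioi 0 x hx)]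
    at deriv_nonpos
  refine nonneg_of_mul_nonneg_left (b := ((x + a) ^ 2)⁻¹) ?_ (by positivity)
  calc 0 ≤ (-1) ^ 1 * (deriv F (x + a)⁻¹ * (-1 / (x + a) ^ 2)) := deriv_nonpos
    _ = deriv F (x + a)⁻¹ * ((x + a) ^ 2)⁻¹ := by ring

theorem div_eq_div_of_hasDerivAt_mul {f g φ : ℝ → ℝ} {s : Set ℝ} (hs : IsOpen s)
    (hs' : IsPreconnected s) (hf : ∀ x ∈ s, HasDerivAt f (f x * φ x) x)
    (hg : ∀ x ∈ s, HasDerivAt g (g x * φ x) x) (hg₀ : ∀ x ∈ s, g x ≠ 0) {x y : ℝ} (hx : x ∈ s)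
    (hy : y ∈ s) : f x / g x = f y / g y := by
  have hasDerivAt_div : ∀ z ∈ s, HasDerivAt (f / g) 0 z := fun z hz => by
    convert! (hf z hz).div (hg z hz) (hg₀ z hz) using 1
    ring
  exact hs.is_const_of_deriv_eq_zero hs'
    (fun z hz => (hasDerivAt_div z hz).differentiableAt.differentiableWithinAt)
    (fun z hz => (hasDerivAt_div z hz).deriv) hx hy

section EulerPow

open FormalMultilinearSeries (ofScalars ofScalarsSum coeff_ofScalars ofScalarsSum_zero)
open Finset.HasAntidiagonal (antidiagonal)

/-- The coefficients `aₙ` of the expansion `(1 + 1 / x) ^ x = e * ∑ aₙ yⁿ` at infinity, in powers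
of `y = (x + 1)⁻¹`. The recursion compares coefficients in
`G'(y) = -(∑ yʲ / (j + 2)) * G(y)`, where `G(y) = ∑ aₙ yⁿ`. -/
noncomputable def eulerPowCoeff : ℕ → ℝ
  | 0 => 1
  | n + 1 => -(∑ j : Fin (n + 1), eulerPowCoeff j / ((n - j : ℕ) + 2)) / (n + 1)

@[simp]
theorem eulerPowCoeff_zero : eulerPowCoeff 0 = 1 := by rw [eulerPowCoeff]

theorem succ_mul_eulerPowCoeff_succ (n : ℕ) :
    (n + 1) * eulerPowCoeff (n + 1) =
      -∑ p ∈ antidiagonal n, eulerPowCoeff p.1 / (p.2 + 2) := by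
  rw [eulerPowCoeff, mul_div_cancel₀ _ n.cast_add_one_ne_zero,
    Finset.Nat.sum_antidiagonal_eq_sum_range_succ (fun i j => eulerPowCoeff i / ((j : ℝ) + 2)),
    Finset.sum_range]

theorem eulerPowCoeff_one : eulerPowCoeff 1 = -1 / 2 := by
  norm_num [eulerPowCoeff]

theorem eulerPowCoeff_two : eulerPowCoeff 2 = -1 / 24 := by
  norm_num [eulerPowCoeff, Fin.sum_univ_succ]

theorem add_two_mul_eulerPowCoeff_add_two (n : ℕ) :
    (n + 2) * eulerPowCoeff (n + 2) =
      -(eulerPowCoeff (n + 1) / 2 + ∑ p ∈ antidiagonal n, eulerPowCoeff p.1 / (p.2 + 3)) := by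
  have one_add_two : (1 : ℝ) + 2 = 3 := by norm_num
  simpa only [Finset.Nat.sum_antidiagonal_succ', Nat.cast_add, Nat.cast_one, Nat.cast_zero,
    zero_add, add_assoc, one_add_one_eq_two, one_add_two] using succ_mul_eulerPowCoeff_succ (n + 1)

theorem mul_div_add_two_le_div_add_three {i j : ℕ} {c : ℝ} (hc : i ≠ 0 → c ≤ 0) :
    (i + j + 2) / (i + j + 3) * (c / (j + 2)) ≤ c / (j + 3) := by
  rcases eq_or_ne i 0 with rfl | hi
  · refine le_of_eq ?_
    rw [Nat.cast_zero, zero_add]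
    field_simp
  · have inv_le : 1 / ((j : ℝ) + 3) ≤ (i + j + 2) / (i + j + 3) * (1 / (j + 2)) := by
      rw [div_mul_div_comm, div_le_div_iff₀ (by positivity) (by positivity)]
      nlinarith [i.cast_nonneg (α := ℝ)]
    calc _ = c * ((i + j + 2) / (i + j + 3) * (1 / (j + 2))) := by ring
      _ ≤ c * (1 / (j + 3)) := mul_le_mul_of_nonpos_left inv_le (hc hi)
      _ = _ := by ring

theorem eulerPowCoeff_add_two_le_of_nonpos {n : ℕ} (h : ∀ i ≤ n, eulerPowCoeff (i + 1) ≤ 0) :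
    eulerPowCoeff (n + 2) ≤ eulerPowCoeff (n + 1) / 12 := by
  have sum_ge : (n + 2) / (n + 3) * ∑ p ∈ antidiagonal n, eulerPowCoeff p.1 / (p.2 + 2) ≤
      ∑ p ∈ antidiagonal n, eulerPowCoeff p.1 / (p.2 + 3) := by
    rw [Finset.mul_sum]
    refine Finset.sum_le_sum fun ⟨i, j⟩ hij => ?_
    obtain rfl : i + j = n := Finset.HasAntidiagonal.mem_antidiagonal.mp hij
    rw [Nat.cast_add]
    refine mul_div_add_two_le_div_add_three fun hi => ?_
    obtain ⟨k, rfl⟩ := Nat.exists_eq_succ_of_ne_zero hi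
    exact h k (by omega)
  have factor_ge : ((n : ℝ) + 2) / 12 ≤ (n + 2) / (n + 3) * (n + 1) - 1 / 2 := by
    rw [div_mul_eq_mul_div, le_sub_iff_add_le, le_div_iff₀ (by positivity)]
    nlinarith [n.cast_nonneg (α := ℝ)]
  refine le_of_mul_le_mul_left ?_ (by positivity : (0 : ℝ) < n + 2)
  calc (n + 2) * eulerPowCoeff (n + 2)
      = -(eulerPowCoeff (n + 1) / 2 + ∑ p ∈ antidiagonal n, eulerPowCoeff p.1 / (p.2 + 3)) :=
        add_two_mul_eulerPowCoeff_add_two n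
    _ ≤ -(eulerPowCoeff (n + 1) / 2 +
          (n + 2) / (n + 3) * ∑ p ∈ antidiagonal n, eulerPowCoeff p.1 / (p.2 + 2)) := by gcongr
    _ = ((n + 2) / (n + 3) * (n + 1) - 1 / 2) * eulerPowCoeff (n + 1) := by
        linear_combination (n + 2 : ℝ) / (n + 3) * -succ_mul_eulerPowCoeff_succ n
    _ ≤ (n + 2) / 12 * eulerPowCoeff (n + 1) := mul_le_mul_of_nonpos_right factor_ge (h n le_rfl)
    _ = (n + 2) * (eulerPowCoeff (n + 1) / 12) := by ring

theorem eulerPowCoeff_succ_nonpos (n : ℕ) : eulerPowCoeff (n + 1) ≤ 0 := by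
  induction n using Nat.strong_induction_on with
  | _ n ih =>
    rcases n with _ | n
    · norm_num [eulerPowCoeff_one]
    · have ratio_le : eulerPowCoeff (n + 2) ≤ eulerPowCoeff (n + 1) / 12 :=
        eulerPowCoeff_add_two_le_of_nonpos fun i hi => ih i (Nat.lt_succ_of_le hi)
      linarith [ih n n.lt_succ_self]

theorem eulerPowCoeff_add_two_le (n : ℕ) : eulerPowCoeff (n + 2) ≤ eulerPowCoeff (n + 1) / 12 :=
  eulerPowCoeff_add_two_le_of_nonpos fun i _ => eulerPowCoeff_succ_nonpos i

theorem norm_eulerPowCoeff_le_one (n : ℕ) : ‖eulerPowCoeff n‖ ≤ 1 := by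
  induction n using Nat.strong_induction_on with
  | _ n ih =>
    rcases n with _ | n
    · simp
    · rw [eulerPowCoeff, norm_div, norm_neg, norm_of_nonneg n.cast_add_one_pos.le,
        div_le_one n.cast_add_one_pos]
      have term_le (j : Fin (n + 1)) : ‖eulerPowCoeff j / ((n - j : ℕ) + 2)‖ ≤ 1 := by
        have denom_ge : 1 ≤ ‖((n - j : ℕ) + 2 : ℝ)‖ := by
          rw [norm_of_nonneg (by positivity)]
          linarith [(n - j : ℕ).cast_nonneg (α := ℝ)]
        rw [norm_div]
        exact div_le_one_of_le₀ ((ih j j.isLt).trans denom_ge) (norm_nonneg _)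
      calc ‖∑ j : Fin (n + 1), eulerPowCoeff j / ((n - j : ℕ) + 2)‖
          ≤ ∑ _ : Fin (n + 1), (1 : ℝ) := norm_sum_le_of_le _ fun j _ => term_le j
        _ = n + 1 := by simp

theorem hasSum_inv_add_two_mul_pow {y : ℝ} (hy : |y| < 1) :
    HasSum (fun n : ℕ => (n + 2 : ℝ)⁻¹ * y ^ n)
      (ofScalarsSum (fun n : ℕ => (n + 2 : ℝ)⁻¹) y) := by
  refine hasSum_ofScalarsSum (C := 1) (fun n => ?_) hy
  rw [norm_of_nonneg (by positivity)]
  exact inv_le_one_of_one_le₀ (by linarith [n.cast_nonneg (α := ℝ)])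

theorem sq_mul_ofScalarsSum_inv_add_two {y : ℝ} (hy : |y| < 1) :
    y ^ 2 * ofScalarsSum (fun n : ℕ => (n + 2 : ℝ)⁻¹) y = -log (1 - y) - y := by
  have hasSum_left := (hasSum_inv_add_two_mul_pow hy).mul_left (y ^ 2)
  have hasSum_right := (hasSum_nat_add_iff' 1).mpr (hasSum_pow_div_log_of_abs_lt_one hy)
  convert! hasSum_left.unique (hasSum_right.congr_fun fun n => ?_) using 1
  · simp
  · push_cast
    ring

theorem hasFPowerSeriesOnBall_eulerPowCoeff :
    HasFPowerSeriesOnBall (ofScalarsSum eulerPowCoeff) (ofScalars ℝ eulerPowCoeff) 0 1 :=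
  hasFPowerSeriesOnBall_ofScalarsSum norm_eulerPowCoeff_le_one

theorem deriv_ofScalarsSum_eulerPowCoeff {y : ℝ} (hy : |y| < 1) :
    deriv (ofScalarsSum eulerPowCoeff) y =
      -(ofScalarsSum eulerPowCoeff y * ofScalarsSum (fun n : ℕ => (n + 2 : ℝ)⁻¹) y) := by
  have hasSum_pow := hasSum_ofScalarsSum norm_eulerPowCoeff_le_one hy
  have hasSum_inv := hasSum_inv_add_two_mul_pow hy
  have hasSum_deriv := hasSum_coeff_mul_pow
    (hasFPowerSeriesOnBall_deriv hasFPowerSeriesOnBall_eulerPowCoeff) (mem_eball_zero_one.mpr hy)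
  rw [← hasSum_deriv.tsum_eq, ← hasSum_pow.tsum_eq, ← hasSum_inv.tsum_eq,
    tsum_mul_tsum_eq_tsum_sum_antidiagonal_of_summable_norm hasSum_pow.summable.norm
      hasSum_inv.summable.norm, ← tsum_neg]
  refine tsum_congr fun n => ?_
  rw [coeff_ofScalars, coeff_ofScalars, succ_mul_eulerPowCoeff_succ, neg_mul, Finset.sum_mul]
  refine congrArg _ (Finset.sum_congr rfl fun ⟨i, j⟩ hij => ?_)
  obtain rfl : i + j = n := Finset.HasAntidiagonal.mem_antidiagonal.mp hij
  ring

theorem sq_mul_deriv_ofScalarsSum_eulerPowCoeff {y : ℝ} (hy : |y| < 1) :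
    y ^ 2 * deriv (ofScalarsSum eulerPowCoeff) y =
      ofScalarsSum eulerPowCoeff y * (log (1 - y) + y) := by
  rw [deriv_ofScalarsSum_eulerPowCoeff hy]
  linear_combination -ofScalarsSum eulerPowCoeff y * sq_mul_ofScalarsSum_inv_add_two hy

theorem hasDerivAt_one_add_one_div_rpow {x : ℝ} (hx : 0 < x) :
    HasDerivAt (fun x : ℝ => (1 + 1 / x) ^ x)
      ((1 + 1 / x) ^ x * (log (1 + 1 / x) - (x + 1)⁻¹)) x := by
  have base_pos : 0 < 1 + 1 / x := by positivity
  have base_deriv : HasDerivAt (fun x : ℝ => 1 + 1 / x) (-1 / x ^ 2) x := by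
    simpa only [one_div] using ((hasDerivAt_id' x).fun_inv hx.ne').const_add 1
  convert! base_deriv.rpow (hasDerivAt_id' x) base_pos using 1
  rw [rpow_sub_one base_pos.ne']
  field_simp
  ring

theorem abs_inv_add_one_lt_one {x : ℝ} (hx : 0 < x) : |(x + 1)⁻¹| < 1 := by
  rw [abs_of_nonneg (by positivity)]
  exact inv_lt_one_of_one_lt₀ (by linarith)

theorem hasDerivAt_ofScalarsSum_eulerPowCoeff_inv_add_one {x : ℝ} (hx : 0 < x) :
    HasDerivAt (fun x : ℝ => ofScalarsSum eulerPowCoeff (x + 1)⁻¹)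
      (ofScalarsSum eulerPowCoeff (x + 1)⁻¹ * (log (1 + 1 / x) - (x + 1)⁻¹)) x := by
  have hy : |(x + 1)⁻¹| < 1 := abs_inv_add_one_lt_one hx
  have differentiableAt : DifferentiableAt ℝ (ofScalarsSum eulerPowCoeff) (x + 1)⁻¹ :=
    (hasFPowerSeriesOnBall_eulerPowCoeff.analyticAt_of_mem
      (mem_eball_zero_one.mpr hy)).differentiableAt
  have log_eq : log (1 + 1 / x) = -log (1 - (x + 1)⁻¹) := by
    have sub_eq : 1 - (x + 1)⁻¹ = x / (x + 1) := by
      field_simp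
      ring
    rw [sub_eq, ← log_inv, inv_div, add_div, div_self hx.ne']
  convert! differentiableAt.hasDerivAt.comp x
    (((hasDerivAt_id' x).add_const 1).fun_inv (by positivity)) using 1
  rw [log_eq, neg_div, one_div, ← inv_pow]
  linear_combination sq_mul_deriv_ofScalarsSum_eulerPowCoeff hy

theorem one_add_one_div_rpow_eq {x : ℝ} (hx : 0 < x) :
    (1 + 1 / x) ^ x = exp 1 * ofScalarsSum eulerPowCoeff (x + 1)⁻¹ := by
  have rpow_ne_zero : ∀ z ∈ Ioi (0 : ℝ), (1 + 1 / z) ^ z ≠ 0 := fun z (hz : 0 < z) => by positivity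
  have tendsto_ratio :
      Tendsto (fun z : ℝ => ofScalarsSum eulerPowCoeff (z + 1)⁻¹ / (1 + 1 / z) ^ z) atTop
        (𝓝 (1 / exp 1)) := by
    simpa only [ofScalarsSum_zero, eulerPowCoeff_zero, one_smul] using!
      (hasFPowerSeriesOnBall_eulerPowCoeff.analyticAt.continuousAt.tendsto.comp
        (tendsto_inv_add_const_atTop_zero 1)).div (tendsto_one_add_div_rpow_exp 1) (exp_ne_zero 1)
  have ratio_const : ∀ z ∈ Ioi (0 : ℝ), ofScalarsSum eulerPowCoeff (z + 1)⁻¹ / (1 + 1 / z) ^ z =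
      ofScalarsSum eulerPowCoeff (x + 1)⁻¹ / (1 + 1 / x) ^ x := fun z hz =>
    div_eq_div_of_hasDerivAt_mul isOpen_Ioi isPreconnected_Ioi
      (fun _ => hasDerivAt_ofScalarsSum_eulerPowCoeff_inv_add_one)
      (fun _ => hasDerivAt_one_add_one_div_rpow) rpow_ne_zero hz hx
  have ratio_eq := tendsto_nhds_unique_of_eventuallyEq tendsto_const_nhds tendsto_ratio
    ((eventually_gt_atTop 0).mono fun z hz => (ratio_const z hz).symm)
  rw [div_eq_div_iff (rpow_ne_zero x hx) (exp_ne_zero 1)] at ratio_eq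
  linarith

/-- The coefficients of the expansion of `(x + c) * (e - (1 + 1 / x) ^ x)` at infinity, in powers of
`y = (x + 1)⁻¹`, obtained by multiplying `e - e * ∑ aₙ yⁿ` by `x + c = y⁻¹ - (1 - c)`. -/
noncomputable def eulerGapCoeff (c : ℝ) : ℕ → ℝ
  | 0 => exp 1 / 2
  | n + 1 => exp 1 * ((1 - c) * eulerPowCoeff (n + 1) - eulerPowCoeff (n + 2))

theorem eulerGapCoeff_nonneg {c : ℝ} (hc : 11 / 12 ≤ c) (n : ℕ) : 0 ≤ eulerGapCoeff c n := by
  rcases n with _ | n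
  · rw [eulerGapCoeff]
    positivity
  · refine mul_nonneg (exp_pos 1).le (sub_nonneg.mpr ?_)
    calc eulerPowCoeff (n + 2) ≤ eulerPowCoeff (n + 1) / 12 := eulerPowCoeff_add_two_le n
      _ = 1 / 12 * eulerPowCoeff (n + 1) := by ring
      _ ≤ (1 - c) * eulerPowCoeff (n + 1) :=
        mul_le_mul_of_nonpos_right (by linarith) (eulerPowCoeff_succ_nonpos n)

theorem eulerGapCoeff_one_nonneg_iff {c : ℝ} : 0 ≤ eulerGapCoeff c 1 ↔ 11 / 12 ≤ c := by
  rw [eulerGapCoeff, eulerPowCoeff_one, eulerPowCoeff_two, mul_nonneg_iff_of_pos_left (exp_pos 1)]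
  constructor <;> intro h <;> linarith

theorem norm_eulerGapCoeff_le (c : ℝ) (n : ℕ) : ‖eulerGapCoeff c n‖ ≤ exp 1 * (|1 - c| + 1) := by
  rcases n with _ | n
  · rw [eulerGapCoeff, norm_of_nonneg (by positivity)]
    nlinarith [exp_pos 1, abs_nonneg (1 - c)]
  · rw [eulerGapCoeff, norm_mul, norm_of_nonneg (exp_pos 1).le]
    gcongr
    calc _ ≤ ‖(1 - c) * eulerPowCoeff (n + 1)‖ + ‖eulerPowCoeff (n + 2)‖ := norm_sub_le _ _
      _ ≤ |1 - c| + 1 := by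
        rw [norm_mul]
        gcongr
        · exact mul_le_of_le_one_right (norm_nonneg _) (norm_eulerPowCoeff_le_one _)
        · exact norm_eulerPowCoeff_le_one _

theorem hasFPowerSeriesOnBall_eulerGapCoeff (c : ℝ) :
    HasFPowerSeriesOnBall (ofScalarsSum (eulerGapCoeff c)) (ofScalars ℝ (eulerGapCoeff c)) 0 1 :=
  hasFPowerSeriesOnBall_ofScalarsSum (norm_eulerGapCoeff_le c)

theorem deriv_ofScalarsSum_eulerGapCoeff_zero (c : ℝ) :
    deriv (ofScalarsSum (eulerGapCoeff c)) 0 = eulerGapCoeff c 1 := by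
  rw [(hasFPowerSeriesOnBall_eulerGapCoeff c).hasFPowerSeriesAt.deriv]
  exact coeff_ofScalars

theorem eqOn_ofScalarsSum_eulerGapCoeff (c : ℝ) :
    EqOn (fun x => (x + c) * (exp 1 - (1 + 1 / x) ^ x))
      (fun x => ofScalarsSum (eulerGapCoeff c) (x + 1)⁻¹) (Ioi 0) := by
  intro x (hx : 0 < x)
  beta_reduce
  set y := (x + 1)⁻¹ with hy_def
  have hy : |y| < 1 := abs_inv_add_one_lt_one hx
  have hx_eq : x = y⁻¹ - 1 := by rw [hy_def, inv_inv, add_sub_cancel_right]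
  have hy₀ : y ≠ 0 := by positivity
  have hasSum_pow := hasSum_ofScalarsSum norm_eulerPowCoeff_le_one hy
  have hasSum_tail : HasSum (fun n => eulerPowCoeff (n + 1) * y ^ (n + 1))
      (ofScalarsSum eulerPowCoeff y - 1) := by
    simpa using (hasSum_nat_add_iff' 1).mpr hasSum_pow
  have hasSum_tail_two : HasSum (fun n => eulerPowCoeff (n + 2) * y ^ (n + 2))
      (ofScalarsSum eulerPowCoeff y - (1 + -1 / 2 * y)) := by
    simpa [Finset.sum_range_succ, eulerPowCoeff_one] using (hasSum_nat_add_iff' 2).mpr hasSum_pow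
  have hasSum_gap_tail : HasSum (fun n => eulerGapCoeff c (n + 1) * y ^ (n + 1))
      (exp 1 * ((1 - c) * (ofScalarsSum eulerPowCoeff y - 1) -
        y⁻¹ * (ofScalarsSum eulerPowCoeff y - (1 + -1 / 2 * y)))) :=
    (((hasSum_tail.mul_left (1 - c)).sub (hasSum_tail_two.mul_left y⁻¹)).mul_left
      (exp 1)).congr_fun fun n => by
        rw [eulerGapCoeff]
        field_simp
        ring
  rw [one_add_one_div_rpow_eq hx, (hasSum_ofScalarsSum (norm_eulerGapCoeff_le c) hy).unique
    ((hasSum_nat_add_iff 1).mp hasSum_gap_tail), Finset.sum_range_one, eulerGapCoeff, ← hy_def,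
    hx_eq]
  field_simp
  ring

end EulerPow

end

theorem stmt_19 (c₀ : ℝ) :
    CompletelyMonotonicOn
      (fun x : ℝ => (x + c₀) * (Real.exp 1 - (1 + 1 / x) ^ x)) (Set.Ioi 0) ↔
    c₀ ≥ 11 / 12 := by
  have powerSeries := hasFPowerSeriesOnBall_eulerGapCoeff c₀
  rw [completelyMonotonicOn_congr (eqOn_ofScalarsSum_eulerGapCoeff c₀)]
  constructor
  · intro h
    rw [ge_iff_le, ← eulerGapCoeff_one_nonneg_iff, ← deriv_ofScalarsSum_eulerGapCoeff_zero]
    exact deriv_nonneg_of_completelyMonotonicOn_comp_inv_add_const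
      powerSeries.analyticAt.contDiffAt h
  · intro hc
    refine completelyMonotonicOn_comp_inv_add_const_of_coeff_nonneg zero_le_one powerSeries
      (fun n => ?_) fun x hx => mem_eball_zero_one.mpr (abs_inv_add_one_lt_one hx)
    rw [FormalMultilinearSeries.coeff_ofScalars]
    exact eulerGapCoeff_nonneg hc n
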